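/- Let N ≥ 1, a ≥ 0, b > 0, and set α = a+b−1 and β = b−1. Let z_1 < ... < z_N be the ordered zeros of the Jacobi polynomial P_N^{(α,β)}, let φ(x) = Π_{1≤i<j≤N}(x_j−x_i)·Π_{j=1}^N(1−x_j)^{(a+b)/2}(1+x_j)^{b/2}, and for κ > 0 let c_κ = (∫_A Π_{i<j}(x_j−x_i)^κ Π_i(1−x_i)^{κ(a+b)/2−1/2}(1+x_i)^{κb/2−1/2} dx)^{−1} be the normalizing constant of the β-Jacobi ensemble on the alcove A = {x ∈ ℝ^N : −1 ≤ x_1 ≤ ... ≤ x_N ≤ 1}. Then lim_{κ→∞} c_κ · κ^{−N/2} · φ(z)^κ · Π_{j=1}^N (1−z_j²)^{−1/2} = √(N!) · ((N+α+β+1)_N)^{3/2} / (2^{2N} π^{N/2} √((α+1)_N (β+1)_N)), where (x)_N = x(x+1)···(x+N−1) denotes the Pochhammer symbol. -/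

import Mathlib

open MeasureTheory Filter Real Finset Topology

/-!
Let `L` be the Jacobi differential operator. It is self-adjoint for the Jacobi weight and does not
raise degrees, so orthogonality forces `L P = λ_N P`. Evaluated at a zero `zᵢ`, this differential
equation is Stieltjes' equilibrium condition: `z` is a critical point of `log φ`.

The density is a product of powers of affine forms, all positive at `z`. Rescaling by `√κ` around
`z` turns it into a Gaussian. A uniform quadratic bound `log q ≤ q - 1 - c (q - 1)²` on each
factor, whose linear terms cancel at the critical point, dominates the rescaled density, so
Laplace's method reduces the limit to the determinant of the Hessian of `-log φ` at `z`.

Up to the factors `1 - zᵢ²`, this Hessian is the matrix of `L - λ_N` on polynomials of degree less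
than `N` in the basis `∏_{l ≠ j} (X - z_l)`. In the monomial basis that operator is triangular with
diagonal entries `λ_k - λ_N`. The remaining product `∏ (1 - zᵢ²)` consists of the values at `±1` of
the monic multiple of `P`. They follow by induction on the degree, since differentiation turns the
equation for `(α, β, N)` into the one for `(α + 1, β + 1, N - 1)`.
-/

/-! ### Laplace's method on a polyhedron -/

section Laplace

variable {ι K : Type*} [Fintype ι] [Fintype K]

open scoped MatrixOrder Matrix.Norms.L2Operator in
lemma exists_transpose_mul_self_eq_of_posDef {H : Matrix ι ι ℝ} (hH : H.PosDef) :
    ∃ S : Matrix ι ι ℝ, S.transpose * S = H := by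
  classical
  have hsymm : (CFC.sqrt H).transpose = CFC.sqrt H := by
    simpa only [Matrix.star_eq_conjTranspose, Matrix.conjTranspose_eq_transpose_of_trivial]
      using (CFC.sqrt_nonneg H).isSelfAdjoint.star_eq
  refine ⟨CFC.sqrt H, ?_⟩
  rw [hsymm]
  exact CFC.sqrt_mul_sqrt_self H (Matrix.nonneg_iff_posSemidef.2 hH.posSemidef)

lemma integral_exp_neg_half_sum_sq :
    ∫ y : ι → ℝ, exp (-(1 / 2) * ∑ i, y i ^ 2) = (2 * π) ^ ((Fintype.card ι : ℝ) / 2) := by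
  simp_rw [Finset.mul_sum, exp_sum]
  rw [integral_fintype_prod_volume_eq_pow (fun x : ℝ ↦ exp (-(1 / 2) * x ^ 2)), integral_gaussian,
    sqrt_eq_rpow, ← rpow_natCast, ← rpow_mul (by positivity)]
  congr 1 <;> ring

lemma integral_exp_neg_half_quadratic [DecidableEq ι] {H : Matrix ι ι ℝ} (hH : H.PosDef) :
    ∫ y : ι → ℝ, exp (-(1 / 2) * (y ⬝ᵥ H.mulVec y)) =
      (2 * π) ^ ((Fintype.card ι : ℝ) / 2) / √H.det := by
  obtain ⟨S, hS⟩ := exists_transpose_mul_self_eq_of_posDef hH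
  have hdet : H.det = S.det ^ 2 := by rw [← hS, Matrix.det_mul, Matrix.det_transpose, sq]
  have hSdet : S.det ≠ 0 := fun h ↦ hH.det_pos.ne' (by rw [hdet, h, sq, zero_mul])
  have hquad (y : ι → ℝ) : y ⬝ᵥ H.mulVec y = ∑ i, Matrix.toLin' S y i ^ 2 := by
    rw [← hS, ← Matrix.mulVec_mulVec, Matrix.dotProduct_mulVec, Matrix.vecMul_transpose]
    simp only [dotProduct, sq, Matrix.toLin'_apply]
  simp_rw [hquad]
  rw [← integral_map (φ := Matrix.toLin' S) (f := fun u : ι → ℝ ↦ exp (-(1 / 2) * ∑ i, u i ^ 2))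
      (Matrix.toLin' S).continuous_on_pi.aemeasurable
      (Continuous.aestronglyMeasurable (by fun_prop)),
    Real.map_matrix_volume_pi_eq_smul_volume_pi hSdet, integral_smul_measure,
    integral_exp_neg_half_sum_sq, hdet, sqrt_sq_eq_abs, ENNReal.toReal_ofReal (abs_nonneg _),
    abs_inv, smul_eq_mul, inv_mul_eq_div]

lemma integrable_exp_neg_mul_quadratic {H : Matrix ι ι ℝ} (hH : H.PosDef) {r : ℝ} (hr : 0 < r) :
    Integrable (fun y : ι → ℝ ↦ exp (-r * (y ⬝ᵥ H.mulVec y))) := by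
  classical
  have hscaled : ((2 * r) • H).PosDef := hH.smul (by positivity)
  have hne : ∫ y : ι → ℝ, exp (-(1 / 2) * (y ⬝ᵥ ((2 * r) • H).mulVec y)) ≠ 0 := by
    rw [integral_exp_neg_half_quadratic hscaled]
    have := hscaled.det_pos
    positivity
  convert Integrable.of_integral_ne_zero hne using 3 with y
  rw [Matrix.smul_mulVec, dotProduct_smul, smul_eq_mul]
  ring

theorem tendsto_rpow_mul_integral_of_le_exp_neg_quadratic [DecidableEq ι] {H : Matrix ι ι ℝ}
    (hH : H.PosDef) {F : ℝ → (ι → ℝ) → ℝ} (hF : ∀ κ, Measurable (F κ)) {C r : ℝ} (hr : 0 < r)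
    (hbound : ∀ᶠ κ in atTop, ∀ y, |F κ y| ≤ C * exp (-r * (κ * (y ⬝ᵥ H.mulVec y))))
    (hlim : ∀ y, Tendsto (fun κ : ℝ ↦ F κ ((√κ)⁻¹ • y)) atTop
      (𝓝 (exp (-(1 / 2) * (y ⬝ᵥ H.mulVec y))))) :
    Tendsto (fun κ : ℝ ↦ κ ^ ((Fintype.card ι : ℝ) / 2) * ∫ y, F κ y) atTop
      (𝓝 ((2 * π) ^ ((Fintype.card ι : ℝ) / 2) / √H.det)) := by
  have hrescaled : Tendsto (fun κ : ℝ ↦ ∫ y, F κ ((√κ)⁻¹ • y)) atTop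
      (𝓝 (∫ y : ι → ℝ, exp (-(1 / 2) * (y ⬝ᵥ H.mulVec y)))) := by
    refine tendsto_integral_filter_of_dominated_convergence
      (fun y ↦ C * exp (-r * (y ⬝ᵥ H.mulVec y)))
      (.of_forall fun κ ↦ ((hF κ).comp (by fun_prop)).aestronglyMeasurable) ?_
      ((integrable_exp_neg_mul_quadratic hH hr).const_mul C) (.of_forall hlim)
    filter_upwards [hbound, eventually_gt_atTop 0] with κ hκ hκ₀
    refine .of_forall fun y ↦ (hκ _).trans_eq ?_
    rw [Matrix.mulVec_smul, dotProduct_smul, smul_dotProduct, smul_eq_mul, smul_eq_mul,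
      ← mul_assoc (√κ)⁻¹, ← mul_inv, mul_self_sqrt hκ₀.le, mul_inv_cancel_left₀ hκ₀.ne']
  rw [integral_exp_neg_half_quadratic hH] at hrescaled
  refine hrescaled.congr' ?_
  filter_upwards [eventually_gt_atTop 0] with κ hκ₀
  rw [Measure.integral_comp_inv_smul_of_nonneg volume (F κ) (sqrt_nonneg κ),
    Module.finrank_fintype_fun_eq_card, smul_eq_mul, sqrt_eq_rpow, ← rpow_natCast,
    ← rpow_mul hκ₀.le]
  congr 2
  ring

lemma le_exp_sub_one_sub_sq_div {q r : ℝ} (hq : 0 ≤ q) (hqr : q ≤ r) :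
    q ≤ exp (q - 1 - (q - 1) ^ 2 / (2 * (r + 1))) := by
  have hsq : √q ^ 2 = q := sq_sqrt hq
  have hsum : (√q + 1) ^ 2 ≤ 2 * (r + 1) := by nlinarith [sq_nonneg (√q - 1)]
  have hdiff : (q - 1) ^ 2 / (2 * (r + 1)) ≤ (√q - 1) ^ 2 := by
    rw [div_le_iff₀ (by linarith)]
    calc (q - 1) ^ 2 = (√q - 1) ^ 2 * (√q + 1) ^ 2 := by
          nth_rw 1 [← hsq]
          ring
      _ ≤ (√q - 1) ^ 2 * (2 * (r + 1)) := by gcongr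
  calc q = √q ^ 2 := hsq.symm
    _ ≤ exp (√q - 1) ^ 2 := by gcongr; linarith [add_one_le_exp (√q - 1)]
    _ = exp (q - 1 - (√q - 1) ^ 2) := by rw [← exp_nat_mul]; congr 1; push_cast; linarith
    _ ≤ exp (q - 1 - (q - 1) ^ 2 / (2 * (r + 1))) := by gcongr

lemma rpow_sub_le_exp {q r p e : ℝ} (hq : 0 ≤ q) (hqr : q ≤ r) (hep : e ≤ p) :
    q ^ (p - e) ≤
      exp (2 * (r + 1) * |e|) * exp (p * (q - 1) - (2 * (r + 1))⁻¹ * (p * (q - 1) ^ 2)) := by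
  set v := q - 1 - (q - 1) ^ 2 / (2 * (r + 1)) with hv
  have hv_abs : |v| ≤ 2 * (r + 1) := by
    have hsq_nonneg : 0 ≤ (q - 1) ^ 2 / (2 * (r + 1)) := by
      have : 0 ≤ r + 1 := by linarith
      positivity
    have hsq_le : (q - 1) ^ 2 / (2 * (r + 1)) ≤ (r + 1) / 2 := by
      rw [div_le_iff₀ (by linarith)]
      nlinarith
    exact abs_le.2 ⟨by linarith, by linarith⟩
  have hev : -(e * v) ≤ 2 * (r + 1) * |e| :=
    calc -(e * v) ≤ |v| * |e| := by rw [← abs_mul, mul_comm]; exact neg_le_abs _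
      _ ≤ 2 * (r + 1) * |e| := by gcongr
  calc q ^ (p - e) ≤ exp v ^ (p - e) :=
        rpow_le_rpow hq (le_exp_sub_one_sub_sq_div hq hqr) (sub_nonneg.2 hep)
    _ = exp (-(e * v) + p * v) := by rw [← exp_mul]; ring_nf
    _ ≤ exp (2 * (r + 1) * |e| + p * v) := by gcongr
    _ = _ := by rw [exp_add, hv]; congr 2; ring

open Asymptotics

lemma log_one_add_sub_isLittleO :
    (fun t : ℝ ↦ log (1 + t) - (t - t ^ 2 / 2)) =o[𝓝 0] fun t ↦ t ^ 2 := by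
  have hcube : (fun t : ℝ ↦ log (1 + t) - (t - t ^ 2 / 2)) =O[𝓝 0] fun t ↦ t ^ 3 := by
    refine IsBigO.of_bound 2 ?_
    filter_upwards [Metric.ball_mem_nhds (0 : ℝ) one_half_pos] with t ht
    rw [Metric.mem_ball, dist_zero_right, norm_eq_abs] at ht
    have hlog := abs_log_sub_add_sum_range_le (x := -t) (by rw [abs_neg]; linarith) 2
    have hsub : log (1 + t) - (t - t ^ 2 / 2) =
        (∑ i ∈ range 2, (-t) ^ (i + 1) / ((i : ℝ) + 1)) + log (1 - -t) := by
      norm_num [sum_range_succ]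
      ring
    calc ‖log (1 + t) - (t - t ^ 2 / 2)‖ ≤ |t| ^ 3 / (1 - |t|) := by
          rwa [norm_eq_abs, hsub, ← abs_neg t]
      _ ≤ |t| ^ 3 / (1 / 2) := by gcongr; linarith
      _ = 2 * ‖t ^ 3‖ := by rw [norm_eq_abs, abs_pow]; ring
  exact hcube.trans_isLittleO (isLittleO_pow_pow (by norm_num))

lemma tendsto_inv_sqrt_mul_atTop (d : ℝ) :
    Tendsto (fun κ : ℝ ↦ (√κ)⁻¹ * d) atTop (𝓝 0) := by
  simpa only [Function.comp_apply, zero_mul] using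
    (tendsto_inv_atTop_zero.comp tendsto_sqrt_atTop).mul_const d

lemma tendsto_one_add_inv_sqrt_mul_atTop (d : ℝ) :
    Tendsto (fun κ : ℝ ↦ 1 + (√κ)⁻¹ * d) atTop (𝓝 1) := by
  simpa only [add_zero] using (tendsto_inv_sqrt_mul_atTop d).const_add 1

lemma tendsto_mul_log_one_add_inv_sqrt_sub (d : ℝ) :
    Tendsto (fun κ : ℝ ↦ κ * (log (1 + (√κ)⁻¹ * d) - (√κ)⁻¹ * d)) atTop (𝓝 (-(d ^ 2 / 2))) := by
  have hremainder : (fun κ : ℝ ↦ κ * (log (1 + (√κ)⁻¹ * d) -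
      ((√κ)⁻¹ * d - ((√κ)⁻¹ * d) ^ 2 / 2))) =o[atTop] fun _ ↦ d ^ 2 := by
    refine ((isBigO_refl (fun κ : ℝ ↦ κ) atTop).mul_isLittleO
      (log_one_add_sub_isLittleO.comp_tendsto (tendsto_inv_sqrt_mul_atTop d))).congr'
      .rfl ?_
    filter_upwards [eventually_gt_atTop 0] with κ hκ₀
    simp only [Function.comp_apply, mul_pow, inv_pow, sq_sqrt hκ₀.le]
    exact mul_inv_cancel_left₀ hκ₀.ne' _
  have hzero := hremainder.tendsto_zero_of_tendsto tendsto_const_nhds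
  refine (by simpa only [zero_sub] using hzero.sub_const (d ^ 2 / 2) :
    Tendsto _ atTop (𝓝 (-(d ^ 2 / 2)))).congr' ?_
  filter_upwards [eventually_gt_atTop 0] with κ hκ₀
  have hsq : κ * ((√κ)⁻¹ * d) ^ 2 = d ^ 2 := by
    rw [mul_pow, inv_pow, sq_sqrt hκ₀.le, mul_inv_cancel_left₀ hκ₀.ne']
  linear_combination hsq / 2

lemma eventually_forall_one_add_inv_sqrt_pos {K : Type*} [Finite K] (d : K → ℝ) :
    ∀ᶠ κ : ℝ in atTop, ∀ k, 0 < 1 + (√κ)⁻¹ * d k :=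
  eventually_all.2 fun k ↦ (tendsto_one_add_inv_sqrt_mul_atTop (d k)).eventually
    (lt_mem_nhds one_pos)

lemma tendsto_prod_one_add_inv_sqrt_rpow {c d : K → ℝ} (e : K → ℝ) (hd : ∑ k, c k * d k = 0) :
    Tendsto (fun κ : ℝ ↦ ∏ k, (1 + (√κ)⁻¹ * d k) ^ (κ * c k - e k)) atTop
      (𝓝 (exp (-(1 / 2) * ∑ k, c k * d k ^ 2))) := by
  have hlog (k : K) : Tendsto (fun κ : ℝ ↦ log (1 + (√κ)⁻¹ * d k)) atTop (𝓝 0) := by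
    simpa only [log_one] using (tendsto_one_add_inv_sqrt_mul_atTop (d k)).log one_ne_zero
  have hexponent : Tendsto (fun κ : ℝ ↦ ∑ k,
      (c k * (κ * (log (1 + (√κ)⁻¹ * d k) - (√κ)⁻¹ * d k)) - e k * log (1 + (√κ)⁻¹ * d k))) atTop
      (𝓝 (∑ k, (c k * (-(d k ^ 2 / 2)) - e k * 0))) :=
    tendsto_finsetSum _ fun k _ ↦
      ((tendsto_mul_log_one_add_inv_sqrt_sub _).const_mul _).sub ((hlog k).const_mul _)
  have hlimit : ∑ k, (c k * (-(d k ^ 2 / 2)) - e k * 0) = -(1 / 2) * ∑ k, c k * d k ^ 2 := by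
    rw [mul_sum]
    exact sum_congr rfl fun k _ ↦ by ring
  rw [hlimit] at hexponent
  refine (continuous_exp.continuousAt.tendsto.comp hexponent).congr' ?_
  filter_upwards [eventually_forall_one_add_inv_sqrt_pos d] with κ hκ
  have hlinear : ∑ k, κ * (√κ)⁻¹ * (c k * d k) = 0 := by rw [← mul_sum, hd, mul_zero]
  simp only [rpow_def_of_pos (hκ _), ← exp_sum, Function.comp_apply]
  rw [← sub_zero (∑ k, log _ * _), ← hlinear, ← sum_sub_distrib]
  exact congrArg exp (sum_congr rfl fun k _ ↦ by ring)

section Polyhedron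

open Matrix

variable (B : Matrix K ι ℝ) (c e : K → ℝ)

/-- The density `∏ₖ (1 + (B y)ₖ) ^ (κ cₖ - eₖ)`, extended by zero outside the polyhedron where all
the bases are nonnegative. -/
noncomputable def polyhedralDensity (κ : ℝ) (y : ι → ℝ) : ℝ :=
  Set.indicator {y | ∀ k, 0 ≤ 1 + (B *ᵥ y) k}
    (fun y ↦ ∏ k, (1 + (B *ᵥ y) k) ^ (κ * c k - e k)) y

lemma measurable_polyhedralDensity (κ : ℝ) : Measurable (polyhedralDensity B c e κ) := by
  have hrow (k : K) : Measurable fun y ↦ 1 + (B *ᵥ y) k := by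
    unfold mulVec dotProduct; fun_prop
  refine (Finset.measurable_prod _ fun k _ ↦ (hrow k).pow_const _).indicator ?_
  rw [Set.ofPred_forall]
  exact MeasurableSet.iInter fun k ↦ measurableSet_le measurable_const (hrow k)

variable {B c}

lemma sum_mul_mulVec_eq_zero (hcrit : c ᵥ* B = 0) (y : ι → ℝ) : ∑ k, c k * (B *ᵥ y) k = 0 := by
  change c ⬝ᵥ B *ᵥ y = 0
  rw [dotProduct_mulVec, hcrit, zero_dotProduct]

lemma exists_forall_one_add_mulVec_le (hc : ∀ k, 0 < c k) (hcrit : c ᵥ* B = 0) :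
    ∃ r, 0 ≤ r ∧ ∀ y, (∀ k, 0 ≤ 1 + (B *ᵥ y) k) → ∀ k, 1 + (B *ᵥ y) k ≤ r := by
  have hnonneg (k : K) : 0 ≤ (∑ j, c j) / c k :=
    div_nonneg (sum_nonneg fun j _ ↦ (hc j).le) (hc k).le
  refine ⟨∑ k, (∑ j, c j) / c k, sum_nonneg fun k _ ↦ hnonneg k, fun y hy k ↦ ?_⟩
  calc 1 + (B *ᵥ y) k ≤ (∑ j, c j) / c k := by
        rw [le_div_iff₀' (hc k)]
        calc c k * (1 + (B *ᵥ y) k) ≤ ∑ j, c j * (1 + (B *ᵥ y) j) :=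
              single_le_sum (fun j _ ↦ mul_nonneg (hc j).le (hy j)) (mem_univ k)
          _ = ∑ j, c j := by
              simp only [mul_add, mul_one, sum_add_distrib, sum_mul_mulVec_eq_zero hcrit, add_zero]
    _ ≤ ∑ k, (∑ j, c j) / c k := single_le_sum (fun j _ ↦ hnonneg j) (mem_univ k)

variable [DecidableEq K]

lemma dotProduct_transpose_mul_diagonal_mul_mulVec (y : ι → ℝ) :
    y ⬝ᵥ (Bᵀ * diagonal c * B) *ᵥ y = ∑ k, c k * (B *ᵥ y) k ^ 2 := by
  rw [← mulVec_mulVec, ← mulVec_mulVec, dotProduct_mulVec, vecMul_transpose]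
  simp only [dotProduct, mulVec_diagonal]
  exact sum_congr rfl fun k _ ↦ by ring

lemma posDef_transpose_mul_diagonal_mul (hc : ∀ k, 0 < c k)
    (hB : Function.Injective (B *ᵥ ·)) : (Bᵀ * diagonal c * B).PosDef := by
  rw [← conjTranspose_eq_transpose_of_trivial]
  exact (PosDef.diagonal hc).conjTranspose_mul_mul_same hB

lemma exists_abs_polyhedralDensity_le (hc : ∀ k, 0 < c k) (hcrit : c ᵥ* B = 0) :
    ∃ C r, 0 < r ∧ ∀ᶠ κ in atTop, ∀ y, |polyhedralDensity B c e κ y| ≤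
      C * exp (-r * (κ * (y ⬝ᵥ (Bᵀ * diagonal c * B) *ᵥ y))) := by
  obtain ⟨r, hr, hle⟩ := exists_forall_one_add_mulVec_le hc hcrit
  refine ⟨∏ k, exp (2 * (r + 1) * |e k|), (2 * (r + 1))⁻¹, by positivity, ?_⟩
  have hexponent : ∀ᶠ κ in atTop, ∀ k, e k ≤ κ * c k :=
    eventually_all.2 fun k ↦ (tendsto_id.atTop_mul_const (hc k)).eventually_ge_atTop (e k)
  filter_upwards [hexponent] with κ hκ y
  by_cases hy : y ∈ {y | ∀ k, 0 ≤ 1 + (B *ᵥ y) k}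
  swap
  · rw [polyhedralDensity, Set.indicator_of_notMem hy, abs_zero]
    positivity
  have hexp : -(2 * (r + 1))⁻¹ * (κ * (y ⬝ᵥ (Bᵀ * diagonal c * B) *ᵥ y)) = ∑ k,
      (κ * c k * (1 + (B *ᵥ y) k - 1) -
        (2 * (r + 1))⁻¹ * (κ * c k * (1 + (B *ᵥ y) k - 1) ^ 2)) := by
    simp only [add_sub_cancel_left, sum_sub_distrib, mul_assoc, ← mul_sum,
      sum_mul_mulVec_eq_zero hcrit, ← dotProduct_transpose_mul_diagonal_mul_mulVec]
    ring
  rw [polyhedralDensity, Set.indicator_of_mem hy,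
    abs_of_nonneg (prod_nonneg fun k _ ↦ rpow_nonneg (hy k) _), hexp, exp_sum, ← prod_mul_distrib]
  exact prod_le_prod (fun k _ ↦ rpow_nonneg (hy k) _)
    fun k _ ↦ rpow_sub_le_exp (hy k) (hle y hy k) (hκ k)

lemma tendsto_polyhedralDensity (hcrit : c ᵥ* B = 0) (y : ι → ℝ) :
    Tendsto (fun κ : ℝ ↦ polyhedralDensity B c e κ ((√κ)⁻¹ • y)) atTop
      (𝓝 (exp (-(1 / 2) * (y ⬝ᵥ (Bᵀ * diagonal c * B) *ᵥ y)))) := by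
  rw [dotProduct_transpose_mul_diagonal_mul_mulVec]
  refine (tendsto_prod_one_add_inv_sqrt_rpow e (sum_mul_mulVec_eq_zero hcrit y)).congr' ?_
  filter_upwards [eventually_forall_one_add_inv_sqrt_pos (B *ᵥ y)] with κ hκ
  have hmem : (√κ)⁻¹ • y ∈ {y | ∀ k, 0 ≤ 1 + (B *ᵥ y) k} := fun k ↦ by
    simpa only [mulVec_smul, Pi.smul_apply, smul_eq_mul] using (hκ k).le
  rw [polyhedralDensity, Set.indicator_of_mem hmem]
  simp only [mulVec_smul, Pi.smul_apply, smul_eq_mul]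

theorem tendsto_rpow_mul_integral_polyhedralDensity [DecidableEq ι] (hc : ∀ k, 0 < c k)
    (hcrit : c ᵥ* B = 0) (hB : Function.Injective (B *ᵥ ·)) :
    Tendsto (fun κ : ℝ ↦ κ ^ ((Fintype.card ι : ℝ) / 2) * ∫ y, polyhedralDensity B c e κ y) atTop
      (𝓝 ((2 * π) ^ ((Fintype.card ι : ℝ) / 2) / √(Bᵀ * diagonal c * B).det)) := by
  obtain ⟨C, r, hr, hbound⟩ := exists_abs_polyhedralDensity_le e hc hcrit
  exact tendsto_rpow_mul_integral_of_le_exp_neg_quadratic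
    (posDef_transpose_mul_diagonal_mul hc hB) (measurable_polyhedralDensity B c e) hr hbound
    (tendsto_polyhedralDensity e hcrit)

variable {A : Matrix K ι ℝ} {t : K → ℝ} {z : ι → ℝ}

lemma one_add_inv_smul_mulVec_sub (hz : ∀ k, 0 < (A *ᵥ z + t) k) (x : ι → ℝ) (k : K) :
    1 + ((diagonal (A *ᵥ z + t)⁻¹ * A) *ᵥ (x - z)) k = (A *ᵥ x + t) k / (A *ᵥ z + t) k := by
  have := (hz k).ne'
  simp only [← mulVec_mulVec, mulVec_diagonal, mulVec_sub, Pi.inv_apply, Pi.sub_apply,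
    Pi.add_apply] at this ⊢
  field_simp
  ring

lemma setIntegral_prod_rpow_eq (hz : ∀ k, 0 < (A *ᵥ z + t) k) (κ : ℝ) :
    ∫ x in {x | ∀ k, 0 ≤ (A *ᵥ x + t) k}, ∏ k, (A *ᵥ x + t) k ^ (κ * c k - e k) =
      (∏ k, (A *ᵥ z + t) k ^ c k) ^ κ * (∏ k, (A *ᵥ z + t) k ^ (-e k)) *
        ∫ y, polyhedralDensity (diagonal (A *ᵥ z + t)⁻¹ * A) c e κ y := by
  have hmeas : MeasurableSet {x | ∀ k, 0 ≤ (A *ᵥ x + t) k} := by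
    rw [Set.ofPred_forall]
    refine MeasurableSet.iInter fun k ↦ measurableSet_le measurable_const ?_
    unfold mulVec dotProduct
    fun_prop
  rw [← integral_indicator hmeas, ← integral_sub_right_eq_self (polyhedralDensity _ c e κ) z,
    ← integral_const_mul]
  refine integral_congr_ae (.of_forall fun x ↦ ?_)
  simp only [polyhedralDensity, Set.indicator, Set.mem_ofPred_eq, one_add_inv_smul_mulVec_sub hz,
    le_div_iff₀ (hz _), zero_mul, mul_ite, mul_zero]
  split_ifs with hx
  · have hfactor (k : K) : (A *ᵥ z + t) k ^ (κ * c k - e k) =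
        ((A *ᵥ z + t) k ^ c k) ^ κ * (A *ᵥ z + t) k ^ (-e k) := by
      rw [← rpow_mul (hz k).le, ← rpow_add (hz k)]
      ring_nf
    rw [← finsetProd_rpow _ _ fun k _ ↦ rpow_nonneg (hz k).le _, ← prod_mul_distrib,
      ← prod_mul_distrib]
    refine prod_congr rfl fun k _ ↦ ?_
    rw [← hfactor, ← mul_rpow (hz k).le (div_nonneg (hx k) (hz k).le),
      mul_div_cancel₀ _ (hz k).ne']
  · rfl

theorem tendsto_rpow_mul_setIntegral_prod_rpow [DecidableEq ι] (hc : ∀ k, 0 < c k)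
    (hA : Function.Injective (A *ᵥ ·)) (hz : ∀ k, 0 < (A *ᵥ z + t) k)
    (hcrit : (c / (A *ᵥ z + t)) ᵥ* A = 0) :
    Tendsto (fun κ : ℝ ↦ κ ^ ((Fintype.card ι : ℝ) / 2) *
      ((∫ x in {x | ∀ k, 0 ≤ (A *ᵥ x + t) k}, ∏ k, (A *ᵥ x + t) k ^ (κ * c k - e k)) /
        (∏ k, (A *ᵥ z + t) k ^ c k) ^ κ)) atTop
      (𝓝 ((∏ k, (A *ᵥ z + t) k ^ (-e k)) * ((2 * π) ^ ((Fintype.card ι : ℝ) / 2) /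
        √(Aᵀ * diagonal (c / (A *ᵥ z + t) ^ 2) * A).det))) := by
  set s := A *ᵥ z + t with hs
  have hpos : 0 < ∏ k, s k ^ c k := prod_pos fun k _ ↦ rpow_pos_of_pos (hz k) _
  have hinj : Function.Injective ((diagonal s⁻¹ * A) *ᵥ ·) := by
    have hdiag : Function.Injective (diagonal s⁻¹ *ᵥ ·) :=
      mulVec_injective_iff_isUnit.2 (isUnit_diagonal.2 (Pi.isUnit_iff.2 fun k ↦
        (inv_pos.2 (hz k)).ne'.isUnit))
    simpa only [← mulVec_mulVec, Function.comp_def] using hdiag.comp hA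
  have hcrit' : c ᵥ* (diagonal s⁻¹ * A) = 0 := by
    rw [← vecMul_vecMul, ← hcrit]
    congr 1
    ext k
    rw [vecMul_diagonal, Pi.inv_apply, Pi.div_apply, div_eq_mul_inv]
  have hhess : (diagonal s⁻¹ * A)ᵀ * diagonal c * (diagonal s⁻¹ * A) =
      Aᵀ * diagonal (c / s ^ 2) * A := by
    rw [transpose_mul, diagonal_transpose, Matrix.mul_assoc, ← Matrix.mul_assoc (diagonal c),
      diagonal_mul_diagonal, Matrix.mul_assoc, ← Matrix.mul_assoc (diagonal _) _ A,
      diagonal_mul_diagonal, Matrix.mul_assoc]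
    congr 3
    ext k
    simp only [Pi.inv_apply, Pi.div_apply, Pi.pow_apply]
    ring
  rw [← hhess]
  refine ((tendsto_rpow_mul_integral_polyhedralDensity e hc hcrit' hinj).const_mul _).congr
    fun κ ↦ ?_
  rw [setIntegral_prod_rpow_eq e hz, ← hs]
  have := (rpow_pos_of_pos hpos κ).ne'
  field_simp

end Polyhedron

end Laplace

/-! ### The alcove as a polyhedron -/

section Alcove

open Matrix

variable {N : ℕ}

/-- The alcove `-1 ≤ x₁ ≤ ⋯ ≤ x_N ≤ 1`. -/
def alcove (N : ℕ) : Set (Fin N → ℝ) :=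
  {x | Monotone x ∧ ∀ i, x i ∈ Set.Icc (-1 : ℝ) 1}

/-- The product `∏_{i<j} (x_j - x_i)^u ∏ᵢ (1 - xᵢ)^v (1 + xᵢ)^w`: the function `φ` and the density
of the Jacobi ensemble are both of this form. -/
noncomputable def jacobiProduct (u v w : ℝ) (x : Fin N → ℝ) : ℝ :=
  (∏ p ∈ univ.filter (fun p : Fin N × Fin N ↦ p.1 < p.2), (x p.2 - x p.1) ^ u) *
    ∏ i, ((1 - x i) ^ v * (1 + x i) ^ w)

/-- Index type of the inequalities `x_i ≤ x_j` (for `i < j`), `xᵢ ≤ 1` and `-1 ≤ xᵢ` that cut out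
the alcove. -/
abbrev AlcoveWall (N : ℕ) : Type :=
  {p : Fin N × Fin N // p.1 < p.2} ⊕ Fin N ⊕ Fin N

/-- The family equal to `u`, `v`, `w` on the walls `x_i ≤ x_j`, `xᵢ ≤ 1`, `-1 ≤ xᵢ` respectively;
both the offsets of the slacks and the exponents of the density are of this form. -/
def wallConst (u v w : ℝ) : AlcoveWall N → ℝ :=
  Sum.elim (fun _ ↦ u) (Sum.elim (fun _ ↦ v) fun _ ↦ w)

/-- The slacks `x_j - x_i`, `1 - xᵢ` and `1 + xᵢ` of the inequalities that cut out the alcove. -/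
def wallSlack (x : Fin N → ℝ) : AlcoveWall N → ℝ :=
  Sum.elim (fun p ↦ x p.1.2 - x p.1.1) (Sum.elim (fun i ↦ 1 - x i) fun i ↦ 1 + x i)

/-- The matrix whose rows are the gradients of the slacks of the alcove. -/
def wallGradient (N : ℕ) : Matrix (AlcoveWall N) (Fin N) ℝ :=
  of (Sum.elim (fun p ↦ Pi.single p.1.2 1 - Pi.single p.1.1 1)
    (Sum.elim (fun i ↦ -Pi.single i 1) fun i ↦ Pi.single i 1))

lemma wallGradient_mulVec_add_const (x : Fin N → ℝ) :
    wallGradient N *ᵥ x + wallConst 0 1 1 = wallSlack x := by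
  ext k
  rcases k with p | i | i
  · change (Pi.single p.1.2 1 - Pi.single p.1.1 1) ⬝ᵥ x + 0 = x p.1.2 - x p.1.1
    simp only [sub_dotProduct, single_one_dotProduct, add_zero]
  · change (-Pi.single i 1) ⬝ᵥ x + 1 = 1 - x i
    rw [neg_dotProduct, single_one_dotProduct, neg_add_eq_sub]
  · change Pi.single i 1 ⬝ᵥ x + 1 = 1 + x i
    rw [single_one_dotProduct, add_comm]

lemma wallGradient_mulVec_injective : Function.Injective (wallGradient N *ᵥ ·) := by
  intro x y hxy
  ext i
  simpa [wallGradient, mulVec] using congrFun hxy (.inr (.inr i))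

lemma setOf_wallSlack_nonneg : {x : Fin N → ℝ | ∀ k, 0 ≤ wallSlack x k} = alcove N := by
  ext x
  simp only [alcove, wallSlack, Sum.forall, Sum.elim_inl, Sum.elim_inr, Set.mem_ofPred_eq,
    Set.mem_Icc, sub_nonneg, Subtype.forall, Prod.forall, monotone_iff_forall_lt, forall_and,
    neg_le_iff_add_nonneg']
  exact and_congr_right' and_comm

lemma wallSlack_pos {z : Fin N → ℝ} (hz : StrictMono z) (hmem : ∀ i, z i ∈ Set.Ioo (-1 : ℝ) 1)
    (k : AlcoveWall N) : 0 < wallSlack z k := by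
  rcases k with p | i | i
  · exact sub_pos.2 (hz p.2)
  · exact sub_pos.2 (hmem i).2
  · exact neg_lt_iff_pos_add'.1 (hmem i).1

lemma prod_wallSlack_rpow (u v w : ℝ) (x : Fin N → ℝ) :
    ∏ k, wallSlack x k ^ wallConst u v w k = jacobiProduct u v w x := by
  simp only [wallSlack, wallConst, jacobiProduct, Fintype.prod_sum_type, Sum.elim_inl,
    Sum.elim_inr, prod_mul_distrib]
  congr 1
  exact (prod_subtype _ (fun p ↦ mem_filter_univ p)
    fun p : Fin N × Fin N ↦ (x p.2 - x p.1) ^ u).symm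

lemma sum_pairs_add_swap (h : Fin N → Fin N → ℝ) :
    ∑ p : {p : Fin N × Fin N // p.1 < p.2}, (h p.1.1 p.1.2 + h p.1.2 p.1.1) =
      ∑ i, ∑ l ∈ univ.erase i, h i l := by
  have hsplit (i : Fin N) : ∑ l ∈ univ.erase i, h i l =
      (∑ l, if i < l then h i l else 0) + ∑ l, if l < i then h i l else 0 := by
    rw [← sum_filter_add_sum_filter_not _ (i < ·), ← sum_filter, ← sum_filter]
    congr 2 <;> ext l <;> simp only [mem_filter, mem_erase, mem_univ] <;> grind
  rw [← sum_subtype _ (fun p ↦ mem_filter_univ p)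
    fun p : Fin N × Fin N ↦ h p.1 p.2 + h p.2 p.1]
  simp_rw [hsplit, sum_add_distrib, sum_filter, Fintype.sum_prod_type]
  rw [sum_comm (f := fun i l ↦ if i < l then h l i else 0)]

lemma sum_pairs_incident (g : Fin N → Fin N → ℝ) (i : Fin N) :
    ∑ p : {p : Fin N × Fin N // p.1 < p.2},
      ((if i = p.1.1 then g p.1.1 p.1.2 else 0) + if i = p.1.2 then g p.1.2 p.1.1 else 0) =
      ∑ l ∈ univ.erase i, g i l := by
  rw [sum_pairs_add_swap fun k l ↦ if i = k then g k l else 0, Fintype.sum_eq_single i]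
  · simp only [if_true]
  · exact fun k hk ↦ sum_eq_zero fun l _ ↦ if_neg hk.symm

/-- Minus the Hessian matrix of `log ∏_{i<j} (x_j - x_i) ∏ᵢ (1 - xᵢ)^v (1 + xᵢ)^w` at `x = z`. -/
noncomputable def jacobiHessian (v w : ℝ) (z : Fin N → ℝ) : Matrix (Fin N) (Fin N) ℝ :=
  of fun i j ↦ if i = j then
      (∑ l ∈ univ.erase i, 1 / (z i - z l) ^ 2) + v / (1 - z i) ^ 2 + w / (1 + z i) ^ 2
    else -(1 / (z i - z j) ^ 2)

lemma transpose_wallGradient_mul_diagonal_mul (v w : ℝ) (z : Fin N → ℝ) :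
    (wallGradient N)ᵀ * diagonal (wallConst 1 v w / wallSlack z ^ 2) * wallGradient N =
      jacobiHessian v w z := by
  ext i j
  have hpairs : ∑ p : {p : Fin N × Fin N // p.1 < p.2},
      ((if i = p.1.2 then 1 else 0) - if i = p.1.1 then 1 else 0) * (1 / (z p.1.2 - z p.1.1) ^ 2) *
        ((if j = p.1.2 then 1 else 0) - if j = p.1.1 then 1 else 0) =
      ∑ l ∈ univ.erase i,
        ((if j = i then 1 else 0) - if j = l then 1 else 0) * (1 / (z i - z l) ^ 2) := by
    rw [← sum_pairs_incident fun k l ↦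
      ((if j = k then 1 else 0) - if j = l then 1 else 0) * (1 / (z k - z l) ^ 2)]
    refine sum_congr rfl fun p _ ↦ ?_
    rw [← neg_sub (z p.1.1), neg_sq]
    split_ifs <;> ring
  rw [mul_apply]
  simp only [mul_diagonal, transpose_apply, wallGradient, wallConst, wallSlack, of_apply,
    Fintype.sum_sum_type, Sum.elim_inl, Sum.elim_inr, Pi.div_apply, Pi.pow_apply, Pi.sub_apply,
    Pi.neg_apply, Pi.single_apply, hpairs, jacobiHessian]
  by_cases hij : i = j
  · subst hij
    have hoff : ∑ l ∈ univ.erase i, (1 - if i = l then 1 else 0) * (1 / (z i - z l) ^ 2) =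
        ∑ l ∈ univ.erase i, 1 / (z i - z l) ^ 2 :=
      sum_congr rfl fun l hl ↦ by rw [if_neg (ne_of_mem_erase hl).symm, sub_zero, one_mul]
    simp only [if_true, hoff]
    simp [add_assoc]
  · simp [hij, Ne.symm hij]

lemma wallConst_one_pos {v w : ℝ} (hv : 0 < v) (hw : 0 < w) (k : AlcoveWall N) :
    0 < wallConst 1 v w k := by
  rcases k with _ | _ | _
  · exact one_pos
  · exact hv
  · exact hw

lemma posDef_jacobiHessian {v w : ℝ} (hv : 0 < v) (hw : 0 < w) {z : Fin N → ℝ}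
    (hz : StrictMono z) (hmem : ∀ i, z i ∈ Set.Ioo (-1 : ℝ) 1) : (jacobiHessian v w z).PosDef := by
  rw [← transpose_wallGradient_mul_diagonal_mul]
  exact posDef_transpose_mul_diagonal_mul
    (fun k ↦ div_pos (wallConst_one_pos hv hw k) (pow_pos (wallSlack_pos hz hmem k) 2))
    wallGradient_mulVec_injective

lemma vecMul_wallGradient_eq_zero {v w : ℝ} {z : Fin N → ℝ}
    (hcrit : ∀ i, ∑ l ∈ univ.erase i, 1 / (z i - z l) - v / (1 - z i) + w / (1 + z i) = 0) :
    (wallConst 1 v w / wallSlack z) ᵥ* wallGradient N = 0 := by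
  ext i
  have hpairs : ∑ p : {p : Fin N × Fin N // p.1 < p.2},
      1 / (z p.1.2 - z p.1.1) * ((if i = p.1.2 then 1 else 0) - if i = p.1.1 then 1 else 0) =
      ∑ l ∈ univ.erase i, 1 / (z i - z l) := by
    rw [← sum_pairs_incident fun k l ↦ 1 / (z k - z l)]
    refine sum_congr rfl fun p _ ↦ ?_
    rw [← neg_sub (z p.1.2), div_neg]
    split_ifs <;> ring
  simp only [vecMul, dotProduct, wallGradient, wallConst, wallSlack, of_apply,
    Fintype.sum_sum_type, Sum.elim_inl, Sum.elim_inr, Pi.div_apply, Pi.sub_apply,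
    Pi.neg_apply, Pi.single_apply, hpairs, mul_neg, mul_ite, mul_one, mul_zero, sum_neg_distrib,
    sum_ite_eq, mem_univ, if_true, Pi.zero_apply]
  linarith [hcrit i]

theorem tendsto_rpow_mul_integral_alcove {v w : ℝ} (hv : 0 < v) (hw : 0 < w) {z : Fin N → ℝ}
    (hz : StrictMono z) (hmem : ∀ i, z i ∈ Set.Ioo (-1 : ℝ) 1)
    (hcrit : ∀ i, ∑ l ∈ univ.erase i, 1 / (z i - z l) - v / (1 - z i) + w / (1 + z i) = 0) :
    Tendsto (fun κ : ℝ ↦ κ ^ ((N : ℝ) / 2) *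
      ((∫ x in alcove N, jacobiProduct κ (κ * v - 1 / 2) (κ * w - 1 / 2) x) /
        jacobiProduct 1 v w z ^ κ)) atTop
      (𝓝 ((∏ i, (1 - z i ^ 2) ^ (-(1 : ℝ) / 2)) *
        ((2 * π) ^ ((N : ℝ) / 2) / √(jacobiHessian v w z).det))) := by
  have hexponent (κ : ℝ) (k : AlcoveWall N) :
      κ * wallConst 1 v w k - wallConst 0 (1 / 2) (1 / 2) k =
        wallConst κ (κ * v - 1 / 2) (κ * w - 1 / 2) k := by
    rcases k with p | i | i <;> simp [wallConst]
  have hneg (k : AlcoveWall N) : -wallConst 0 (1 / 2) (1 / 2) k =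
      wallConst 0 (-(1 : ℝ) / 2) (-(1 : ℝ) / 2) k := by
    rcases k with p | i | i <;> simp [wallConst, neg_div]
  have hone_sub_sq : jacobiProduct 0 (-(1 : ℝ) / 2) (-(1 : ℝ) / 2) z =
      ∏ i, (1 - z i ^ 2) ^ (-(1 : ℝ) / 2) := by
    simp only [jacobiProduct, rpow_zero, prod_const_one, one_mul]
    refine prod_congr rfl fun i _ ↦ ?_
    rw [← mul_rpow (by linarith [(hmem i).2]) (by linarith [(hmem i).1])]
    ring_nf
  have hlaplace := tendsto_rpow_mul_setIntegral_prod_rpow (t := wallConst 0 1 1) (z := z)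
    (wallConst 0 (1 / 2) (1 / 2)) (wallConst_one_pos hv hw) wallGradient_mulVec_injective
    (by simpa only [wallGradient_mulVec_add_const] using wallSlack_pos hz hmem)
    (by simpa only [wallGradient_mulVec_add_const] using vecMul_wallGradient_eq_zero hcrit)
  simpa only [wallGradient_mulVec_add_const, setOf_wallSlack_nonneg, hexponent, hneg,
    prod_wallSlack_rpow, transpose_wallGradient_mul_diagonal_mul, hone_sub_sq, Fintype.card_fin]
    using hlaplace

end Alcove

/-! ### The Jacobi differential equation -/

section JacobiOperator

open Polynomial

/-- The Jacobi differential operator `(1 - x²) d²/dx² + (β - α - (α + β + 2) x) d/dx`. -/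
noncomputable def jacobiOperator (α β : ℝ) : ℝ[X] →ₗ[ℝ] ℝ[X] :=
  LinearMap.mulLeft ℝ (1 - X ^ 2) ∘ₗ derivative ∘ₗ derivative +
    LinearMap.mulLeft ℝ (C (β - α) - C (α + β + 2) * X) ∘ₗ derivative

/-- The eigenvalue of the Jacobi operator on its eigenfunction of degree `n`. -/
noncomputable def jacobiEigenvalue (α β : ℝ) (n : ℕ) : ℝ :=
  -(n * (n + α + β + 1))

lemma jacobiOperator_apply (α β : ℝ) (p : ℝ[X]) :
    jacobiOperator α β p = (1 - X ^ 2) * derivative (derivative p) +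
      (C (β - α) - C (α + β + 2) * X) * derivative p :=
  rfl

lemma eval_jacobiOperator (α β : ℝ) (p : ℝ[X]) (x : ℝ) :
    (jacobiOperator α β p).eval x = (1 - x ^ 2) * p.derivative.derivative.eval x +
      (β - α - (α + β + 2) * x) * p.derivative.eval x := by
  simp only [jacobiOperator_apply, eval_add, eval_mul, eval_sub, eval_one, eval_pow, eval_X, eval_C]

lemma coeff_jacobiOperator (α β : ℝ) (p : ℝ[X]) (k : ℕ) :
    (jacobiOperator α β p).coeff k = (k + 2) * (k + 1) * p.coeff (k + 2) +
      (β - α) * (k + 1) * p.coeff (k + 1) + jacobiEigenvalue α β k * p.coeff k := by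
  have hexpand : jacobiOperator α β p = derivative (derivative p) -
      X ^ 2 * derivative (derivative p) + C (β - α) * derivative p -
      C (α + β + 2) * (X * derivative p) := by
    rw [jacobiOperator_apply]; ring
  rw [hexpand]
  simp only [jacobiEigenvalue, coeff_add, coeff_sub, coeff_C_mul]
  rcases k with _ | _ | k <;>
  · simp [coeff_derivative, coeff_X_pow_mul', coeff_X_mul]
    ring

lemma degree_jacobiOperator_lt {α β : ℝ} {p : ℝ[X]} {n : ℕ} (hp : p.degree < n) :
    (jacobiOperator α β p).degree < n := by
  rw [degree_lt_iff_coeff_zero] at hp ⊢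
  intro k hk
  rw [coeff_jacobiOperator, hp k hk, hp (k + 1) (by omega), hp (k + 2) (by omega)]
  ring

lemma degree_jacobiOperator_sub_lt {α β : ℝ} {p : ℝ[X]} {n : ℕ} (hp : p.degree ≤ n) :
    (jacobiOperator α β p - jacobiEigenvalue α β n • p).degree < n := by
  rw [degree_le_iff_coeff_zero] at hp
  rw [degree_lt_iff_coeff_zero]
  intro k hk
  rw [coeff_sub, coeff_smul, smul_eq_mul, coeff_jacobiOperator,
    hp (k + 1) (by exact_mod_cast (by omega : n < k + 1)),
    hp (k + 2) (by exact_mod_cast (by omega : n < k + 2))]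
  rcases hk.eq_or_lt with rfl | hlt
  · ring
  · rw [hp k (by exact_mod_cast hlt)]
    ring

/-- The integral of a polynomial against the weight `(1 - x)^α (1 + x)^β` on `(-1, 1)`. -/
noncomputable def jacobiIntegral (α β : ℝ) (p : ℝ[X]) : ℝ :=
  ∫ x in Set.Ioo (-1 : ℝ) 1, p.eval x * (1 - x) ^ α * (1 + x) ^ β

lemma intervalIntegrable_jacobiWeight_left (α : ℝ) {β : ℝ} (hβ : -1 < β) :
    IntervalIntegrable (fun x : ℝ ↦ (1 - x) ^ α * (1 + x) ^ β) volume (-1) 0 := by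
  have hsing : IntervalIntegrable (fun x : ℝ ↦ (1 + x) ^ β) volume (-1) 0 := by
    simpa only [zero_sub, sub_self, add_comm] using
      (intervalIntegral.intervalIntegrable_rpow' (a := 0) (b := 1) hβ).comp_add_right 1
  refine hsing.continuousOn_mul (ContinuousOn.rpow_const (by fun_prop) fun x hx ↦ .inl ?_)
  rw [Set.uIcc_of_le (by norm_num)] at hx
  linarith [hx.2]

variable {α β : ℝ}

lemma intervalIntegrable_eval_mul_jacobiWeight (hα : -1 < α) (hβ : -1 < β) (p : ℝ[X]) :
    IntervalIntegrable (fun x : ℝ ↦ p.eval x * (1 - x) ^ α * (1 + x) ^ β) volume (-1) 1 := by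
  have hright : IntervalIntegrable (fun x : ℝ ↦ (1 - x) ^ α * (1 + x) ^ β) volume 0 1 := by
    have hrefl := ((intervalIntegrable_jacobiWeight_left β hα).comp_sub_left 0).symm
    simpa [mul_comm, ← sub_eq_add_neg] using hrefl
  simpa only [mul_assoc] using
    ((intervalIntegrable_jacobiWeight_left α hβ).trans hright).continuousOn_mul
      p.continuous.continuousOn

lemma integrableOn_eval_mul_jacobiWeight (hα : -1 < α) (hβ : -1 < β) (p : ℝ[X]) :
    IntegrableOn (fun x : ℝ ↦ p.eval x * (1 - x) ^ α * (1 + x) ^ β) (Set.Ioo (-1) 1) :=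
  ((intervalIntegrable_iff_integrableOn_Ioc_of_le (by norm_num)).1
    (intervalIntegrable_eval_mul_jacobiWeight hα hβ p)).mono_set Set.Ioo_subset_Ioc_self

lemma jacobiIntegral_sub (hα : -1 < α) (hβ : -1 < β) (p q : ℝ[X]) :
    jacobiIntegral α β (p - q) = jacobiIntegral α β p - jacobiIntegral α β q := by
  simp only [jacobiIntegral, eval_sub, sub_mul]
  exact integral_sub (integrableOn_eval_mul_jacobiWeight hα hβ p)
    (integrableOn_eval_mul_jacobiWeight hα hβ q)

lemma jacobiIntegral_derivative (hα : -1 < α) (hβ : -1 < β) (F : ℝ[X]) :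
    jacobiIntegral α β ((1 - X ^ 2) * derivative F + (C (β - α) - C (α + β + 2) * X) * F) = 0 := by
  rw [jacobiIntegral, ← integral_Ioc_eq_integral_Ioo,
    ← intervalIntegral.integral_of_le (by norm_num),
    intervalIntegral.integral_eq_sub_of_hasDerivAt_of_le
      (f := fun x ↦ F.eval x * ((1 - x) ^ (α + 1) * (1 + x) ^ (β + 1))) (by norm_num) ?_ ?_
      (intervalIntegrable_eval_mul_jacobiWeight hα hβ _)]
  · simp [zero_rpow (by linarith : α + 1 ≠ 0), zero_rpow (by linarith : β + 1 ≠ 0)]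
  · exact F.continuous.continuousOn.mul
      ((ContinuousOn.rpow_const (by fun_prop) fun _ _ ↦ .inr (by linarith)).mul
        (ContinuousOn.rpow_const (by fun_prop) fun _ _ ↦ .inr (by linarith)))
  · intro x hx
    have hsub : 0 < 1 - x := by linarith [hx.2]
    have hadd : 0 < 1 + x := by linarith [hx.1]
    have hderiv := (F.hasDerivAt x).mul
      ((((hasDerivAt_id x).const_sub 1).rpow_const (p := α + 1) (.inl hsub.ne')).mul
        (((hasDerivAt_id x).const_add 1).rpow_const (p := β + 1) (.inl hadd.ne')))
    refine hderiv.congr_deriv ?_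
    simp [rpow_add_one hsub.ne', rpow_add_one hadd.ne']
    ring

lemma jacobiIntegral_jacobiOperator_mul (hα : -1 < α) (hβ : -1 < β) (p q : ℝ[X]) :
    jacobiIntegral α β (jacobiOperator α β p * q) =
      jacobiIntegral α β (p * jacobiOperator α β q) := by
  rw [← sub_eq_zero, ← jacobiIntegral_sub hα hβ,
    ← jacobiIntegral_derivative hα hβ (derivative p * q - p * derivative q)]
  congr 1
  simp only [jacobiOperator_apply, derivative_sub, derivative_mul]
  ring

lemma eq_zero_of_jacobiIntegral_mul_self_eq_zero (hα : -1 < α) (hβ : -1 < β) {p : ℝ[X]}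
    (hp : jacobiIntegral α β (p * p) = 0) : p = 0 := by
  have hpos : ∀ x ∈ Set.Ioo (-1 : ℝ) 1, 0 < (1 - x) ^ α * (1 + x) ^ β := fun x hx ↦
    mul_pos (rpow_pos_of_pos (by linarith [hx.2]) _) (rpow_pos_of_pos (by linarith [hx.1]) _)
  rw [jacobiIntegral, setIntegral_eq_zero_iff_of_nonneg_ae ?_
    (integrableOn_eval_mul_jacobiWeight hα hβ _)] at hp
  · have hzero : (fun x ↦ p.eval x) =ᵐ[volume.restrict (Set.Ioo (-1) 1)] fun _ ↦ 0 := by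
      filter_upwards [hp, ae_restrict_mem measurableSet_Ioo] with x hx hmem
      simpa [mul_assoc, (hpos x hmem).ne'] using hx
    have heq := Measure.eqOn_Ioo_of_ae_eq volume hzero p.continuous.continuousOn continuousOn_const
    exact eq_zero_of_infinite_isRoot p ((Set.Ioo_infinite (by norm_num)).mono heq)
  · filter_upwards [ae_restrict_mem measurableSet_Ioo] with x hx
    rw [eval_mul, mul_assoc]
    exact mul_nonneg (mul_self_nonneg _) (hpos x hx).le

theorem jacobiOperator_eq_smul_of_orthogonal (hα : -1 < α) (hβ : -1 < β) {P : ℝ[X]}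
    {n : ℕ} (hdeg : P.degree = n)
    (horth : ∀ Q : ℝ[X], Q.degree < n → jacobiIntegral α β (P * Q) = 0) :
    jacobiOperator α β P = jacobiEigenvalue α β n • P := by
  set R := jacobiOperator α β P - jacobiEigenvalue α β n • P with hR
  have hRdeg : R.degree < n := degree_jacobiOperator_sub_lt hdeg.le
  have hsq : R * R = jacobiOperator α β P * R - P * (jacobiEigenvalue α β n • R) := by
    rw [mul_smul_comm, ← smul_mul_assoc, ← sub_mul]
  refine sub_eq_zero.1 (eq_zero_of_jacobiIntegral_mul_self_eq_zero hα hβ ?_)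
  rw [← hR, hsq, jacobiIntegral_sub hα hβ, jacobiIntegral_jacobiOperator_mul hα hβ,
    horth _ (degree_jacobiOperator_lt hRdeg), horth _ ((degree_smul_le _ _).trans_lt hRdeg),
    sub_zero]

end JacobiOperator

section EndpointValues

open Polynomial

lemma prod_range_succ_add_natCast (x : ℝ) (n : ℕ) :
    ∏ j ∈ range (n + 1), (x + j) = x * ∏ j ∈ range n, (x + 1 + j) := by
  rw [prod_range_succ', Nat.cast_zero, add_zero, mul_comm]
  congr 1
  exact prod_congr rfl fun j _ ↦ by push_cast; ring

lemma derivative_jacobiOperator (α β : ℝ) (p : ℝ[X]) :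
    derivative (jacobiOperator α β p) =
      jacobiOperator (α + 1) (β + 1) (derivative p) - (α + β + 2) • derivative p := by
  simp only [jacobiOperator_apply, smul_eq_C_mul, derivative_mul,
    derivative_one, derivative_C, derivative_X, derivative_X_pow, derivative_ofNat, map_add,
    map_sub, map_one, map_ofNat, Nat.cast_ofNat]
  ring

lemma jacobiOperator_derivative_eq_smul {α β : ℝ} {p : ℝ[X]} {n : ℕ}
    (hode : jacobiOperator α β p = jacobiEigenvalue α β (n + 1) • p) :
    jacobiOperator (α + 1) (β + 1) (derivative p) =
      jacobiEigenvalue (α + 1) (β + 1) n • derivative p := by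
  have hderiv := derivative_jacobiOperator α β p
  rw [hode, derivative_smul, eq_sub_iff_add_eq, ← add_smul] at hderiv
  rw [← hderiv]
  congr 1
  simp only [jacobiEigenvalue, Nat.cast_add, Nat.cast_one]
  ring

lemma jacobiOperator_comp_neg_X (α β : ℝ) (p : ℝ[X]) :
    jacobiOperator β α (p.comp (-X)) = (jacobiOperator α β p).comp (-X) := by
  simp only [jacobiOperator_apply, derivative_comp, derivative_neg, derivative_X, derivative_mul,
    add_comp, mul_comp, sub_comp, one_comp, pow_comp, X_comp, C_comp, ofNat_comp, map_sub, map_add,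
    map_ofNat, derivative_one, neg_zero, zero_mul, zero_add]
  ring

lemma jacobiEigenvalue_comm (α β : ℝ) (n : ℕ) :
    jacobiEigenvalue β α n = jacobiEigenvalue α β n := by
  rw [jacobiEigenvalue, jacobiEigenvalue, add_right_comm (n : ℝ)]

lemma eval_one_mul_prod_of_jacobiOperator_eq_smul {n : ℕ} {α β : ℝ} {p : ℝ[X]}
    (hdeg : p.natDegree = n) (hode : jacobiOperator α β p = jacobiEigenvalue α β n • p) :
    p.eval 1 * ∏ j ∈ range n, (n + α + β + 1 + j) =
      p.leadingCoeff * 2 ^ n * ∏ j ∈ range n, (α + 1 + j) := by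
  induction n generalizing α β p with
  | zero => rw [eq_C_of_natDegree_eq_zero hdeg]; simp
  | succ n ih =>
    have hdeg' : p.derivative.natDegree = n := by
      rw [natDegree_derivative, hdeg, Nat.add_sub_cancel]
    have hderiv := ih hdeg' (jacobiOperator_derivative_eq_smul hode)
    have hlead : p.derivative.leadingCoeff = p.leadingCoeff * (n + 1) := by
      rw [leadingCoeff, leadingCoeff, hdeg', hdeg, coeff_derivative]
    have hone := congrArg (eval 1) hode
    rw [eval_jacobiOperator, eval_smul, smul_eq_mul, jacobiEigenvalue] at hone
    rw [prod_range_succ_add_natCast, prod_range_succ_add_natCast (α + 1)]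
    rw [hlead] at hderiv
    push_cast at hone ⊢
    rw [show (n : ℝ) + 1 + α + β + 1 + 1 = n + (α + 1) + (β + 1) + 1 by ring]
    refine mul_left_cancel₀ (by positivity : (n + 1 : ℝ) ≠ 0) ?_
    linear_combination 2 * (α + 1) * hderiv +
      (∏ j ∈ range n, ((n : ℝ) + (α + 1) + (β + 1) + 1 + j)) * hone

lemma eval_neg_one_mul_prod_of_jacobiOperator_eq_smul {n : ℕ} {α β : ℝ} {p : ℝ[X]}
    (hdeg : p.natDegree = n) (hode : jacobiOperator α β p = jacobiEigenvalue α β n • p) :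
    p.eval (-1) * ∏ j ∈ range n, (n + α + β + 1 + j) =
      p.leadingCoeff * (-2) ^ n * ∏ j ∈ range n, (β + 1 + j) := by
  have hdeg' : (p.comp (-X)).natDegree = n := by rw [natDegree_comp, natDegree_neg, natDegree_X,
    mul_one, hdeg]
  have hode' : jacobiOperator β α (p.comp (-X)) = jacobiEigenvalue β α n • p.comp (-X) := by
    rw [jacobiOperator_comp_neg_X, hode, smul_comp, jacobiEigenvalue_comm]
  have hone := eval_one_mul_prod_of_jacobiOperator_eq_smul hdeg' hode'
  rw [comp_neg_X_leadingCoeff_eq, hdeg, eval_comp, eval_neg, eval_X] at hone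
  simp only [add_right_comm (n : ℝ) β α] at hone
  rw [hone, neg_pow 2 n]
  ring

lemma prod_one_sub_sq_mul_prod_sq {α β : ℝ} {n : ℕ} {z : Fin n → ℝ}
    (hode : jacobiOperator α β (Lagrange.nodal univ z) =
      jacobiEigenvalue α β n • Lagrange.nodal univ z) :
    (∏ i, (1 - z i ^ 2)) * (∏ j ∈ range n, (n + α + β + 1 + j)) ^ 2 =
      4 ^ n * ((∏ j ∈ range n, (α + 1 + j)) * ∏ j ∈ range n, (β + 1 + j)) := by
  have hdeg : (Lagrange.nodal univ z).natDegree = n := by simp [Lagrange.natDegree_nodal]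
  have hright := eval_one_mul_prod_of_jacobiOperator_eq_smul hdeg hode
  have hleft := eval_neg_one_mul_prod_of_jacobiOperator_eq_smul hdeg hode
  rw [Lagrange.nodal_monic, one_mul, Lagrange.eval_nodal] at hright hleft
  have hprod : ∏ i, (1 - z i ^ 2) = (-1) ^ n * ((∏ i, (1 - z i)) * ∏ i, (-1 - z i)) := by
    rw [← prod_mul_distrib, ← Fin.prod_const, ← prod_mul_distrib]
    exact prod_congr rfl fun i _ ↦ by ring
  calc _ = (-1) ^ n * (((∏ i, (1 - z i)) * ∏ j ∈ range n, (n + α + β + 1 + j)) *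
        ((∏ i, (-1 - z i)) * ∏ j ∈ range n, (n + α + β + 1 + j))) := by rw [hprod]; ring
    _ = ((-1) * (2 * (-2))) ^ n *
        ((∏ j ∈ range n, (α + 1 + j)) * ∏ j ∈ range n, (β + 1 + j)) := by
      rw [hright, hleft, mul_pow, mul_pow]; ring
    _ = _ := by norm_num

end EndpointValues

/-! ### The Hessian determinant at the zeros -/

section HessianDeterminant

open Polynomial

lemma of_eval_eq_vandermonde_mul {R : Type*} [CommRing R] {n : ℕ} (v : Fin n → R)
    {q : Fin n → R[X]} (hq : ∀ j, (q j).natDegree < n) :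
    Matrix.of (fun i j ↦ (q j).eval (v i)) =
      Matrix.vandermonde v * Matrix.of fun (k : Fin n) j ↦ (q j).coeff k := by
  ext i j
  simp only [Matrix.of_apply, Matrix.mul_apply, Matrix.vandermonde_apply,
    eval_eq_sum_range' (hq j), mul_comm (v i ^ _)]
  exact (Fin.sum_univ_eq_sum_range (fun k ↦ (q j).coeff k * v i ^ k) n).symm

lemma coeff_map_eq_sum {R : Type*} [CommRing R] (T : R[X] →ₗ[R] R[X]) {n : ℕ} {q : R[X]}
    (hq : q.natDegree < n) (m : ℕ) :
    (T q).coeff m = ∑ k : Fin n, (T (X ^ (k : ℕ))).coeff m * q.coeff k := by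
  conv_lhs => rw [q.as_sum_range' n hq]
  simp only [← C_mul_X_pow_eq_monomial, ← smul_eq_C_mul, map_sum, map_smul, finsetSum_coeff,
    coeff_smul, smul_eq_mul, mul_comm (q.coeff _)]
  exact (Fin.sum_univ_eq_sum_range (fun k ↦ (T (X ^ k)).coeff m * q.coeff k) n).symm

lemma natDegree_map_lt {R : Type*} [CommRing R] {T : R[X] →ₗ[R] R[X]}
    (hT : ∀ k, (T (X ^ k)).natDegree ≤ k) {n : ℕ} {q : R[X]} (hq : q.natDegree < n) :
    (T q).natDegree < n := by
  refine (natDegree_le_iff_coeff_eq_zero.2 fun m hm ↦ ?_).trans_lt hq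
  rw [coeff_map_eq_sum T (Nat.lt_succ_self _)]
  exact sum_eq_zero fun k _ ↦ by
    rw [coeff_eq_zero_of_natDegree_lt ((hT k).trans_lt (by omega)), zero_mul]

theorem det_eval_map_eq {R : Type*} [CommRing R] {T : R[X] →ₗ[R] R[X]}
    (hT : ∀ k, (T (X ^ k)).natDegree ≤ k) {n : ℕ} (v : Fin n → R) {q : Fin n → R[X]}
    (hq : ∀ j, (q j).natDegree < n) :
    (Matrix.of fun i j ↦ (T (q j)).eval (v i)).det =
      (∏ k ∈ range n, (T (X ^ k)).coeff k) * (Matrix.of fun i j ↦ (q j).eval (v i)).det := by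
  have hcoeff : (Matrix.of fun (k : Fin n) j ↦ (T (q j)).coeff k) =
      Matrix.of (fun m k : Fin n ↦ (T (X ^ (k : ℕ))).coeff m) *
        Matrix.of fun (k : Fin n) j ↦ (q j).coeff k := by
    ext m j
    exact coeff_map_eq_sum T (hq j) m
  have htriangular :
      (Matrix.of fun m k : Fin n ↦ (T (X ^ (k : ℕ))).coeff m).IsUpperTriangular :=
    fun m k hkm ↦ coeff_eq_zero_of_natDegree_lt ((hT k).trans_lt hkm)
  rw [of_eval_eq_vandermonde_mul v fun j ↦ natDegree_map_lt hT (hq j), hcoeff,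
    of_eval_eq_vandermonde_mul v hq, Matrix.det_mul, Matrix.det_mul, Matrix.det_mul,
    Matrix.det_of_isUpperTriangular htriangular,
    ← Fin.prod_univ_eq_prod_range fun k ↦ (T (X ^ k)).coeff k]
  simp only [Matrix.of_apply]
  ring

lemma eval_derivative_nodal {K ι : Type*} [Field K] {s : Finset ι} {z : ι → K}
    {x : K} (hx : ∀ l ∈ s, x ≠ z l) :
    (derivative (Lagrange.nodal s z)).eval x =
      (Lagrange.nodal s z).eval x * ∑ l ∈ s, 1 / (x - z l) := by
  classical
  rw [Lagrange.derivative_nodal, eval_finsetSum, mul_sum]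
  refine sum_congr rfl fun l hl ↦ ?_
  rw [Lagrange.nodal_eq_mul_nodal_erase hl, eval_mul, eval_sub, eval_X, eval_C, mul_one_div,
    mul_div_cancel_left₀ _ (sub_ne_zero.2 (hx l hl))]

lemma eval_derivative_derivative_nodal {K ι : Type*} [Field K] {s : Finset ι} {z : ι → K}
    {x : K} (hx : ∀ l ∈ s, x ≠ z l) :
    (derivative (derivative (Lagrange.nodal s z))).eval x = (Lagrange.nodal s z).eval x *
      ((∑ l ∈ s, 1 / (x - z l)) ^ 2 - ∑ l ∈ s, 1 / (x - z l) ^ 2) := by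
  classical
  rw [Lagrange.derivative_nodal, derivative_sum, eval_finsetSum, sq, sum_mul,
    ← sum_sub_distrib, mul_sum]
  refine sum_congr rfl fun l hl ↦ ?_
  have hne : x - z l ≠ 0 := sub_ne_zero.2 (hx l hl)
  rw [eval_derivative_nodal fun m hm ↦ hx m (mem_of_mem_erase hm),
    Lagrange.nodal_eq_mul_nodal_erase hl, eval_mul, eval_sub, eval_X, eval_C,
    ← add_sum_erase s _ hl]
  field_simp
  ring

lemma jacobiOperator_X_sub_C_mul (α β c : ℝ) (q : ℝ[X]) :
    jacobiOperator α β ((X - C c) * q) = (X - C c) * jacobiOperator α β q +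
      (2 * (1 - X ^ 2) * derivative q + (C (β - α) - C (α + β + 2) * X) * q) := by
  simp only [jacobiOperator_apply, derivative_mul, derivative_sub, derivative_X, derivative_C,
    derivative_add, sub_zero, one_mul]
  ring

variable {α β μ : ℝ} {N : ℕ} {z : Fin N → ℝ}

lemma X_sub_C_mul_jacobiOperator_sub
    (hode : jacobiOperator α β (Lagrange.nodal univ z) = μ • Lagrange.nodal univ z) (j : Fin N) :
    (X - C (z j)) * (jacobiOperator α β (Lagrange.nodal (univ.erase j) z) -
        μ • Lagrange.nodal (univ.erase j) z) =
      -(2 * (1 - X ^ 2) * derivative (Lagrange.nodal (univ.erase j) z) +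
        (C (β - α) - C (α + β + 2) * X) * Lagrange.nodal (univ.erase j) z) := by
  rw [Lagrange.nodal_eq_mul_nodal_erase (mem_univ j), jacobiOperator_X_sub_C_mul] at hode
  rw [mul_sub, mul_smul_comm, ← hode]
  ring

lemma eval_nodal_erase_ne_zero (hz : Function.Injective z) (i : Fin N) :
    (Lagrange.nodal (univ.erase i) z).eval (z i) ≠ 0 :=
  Lagrange.eval_nodal_not_at_node fun _ hl ↦ hz.ne (ne_of_mem_erase hl).symm

lemma sum_one_div_sub_of_jacobiOperator_eq_smul (hz : Function.Injective z)
    (hode : jacobiOperator α β (Lagrange.nodal univ z) = μ • Lagrange.nodal univ z) (i : Fin N) :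
    2 * (1 - z i ^ 2) * ∑ l ∈ univ.erase i, 1 / (z i - z l) + (β - α - (α + β + 2) * z i) = 0 := by
  have hnode : ∀ l ∈ univ.erase i, z i ≠ z l := fun l hl ↦ hz.ne (ne_of_mem_erase hl).symm
  have heval := congrArg (eval (z i)) (X_sub_C_mul_jacobiOperator_sub hode i)
  simp only [eval_mul, eval_sub, eval_add, eval_neg, eval_X, eval_C, eval_one, eval_pow,
    eval_ofNat, sub_self, zero_mul, eval_derivative_nodal hnode] at heval
  refine mul_left_cancel₀ (eval_nodal_erase_ne_zero hz i) ?_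
  linear_combination heval

lemma eval_jacobiOperator_sub_of_ne (hz : Function.Injective z)
    (hode : jacobiOperator α β (Lagrange.nodal univ z) = μ • Lagrange.nodal univ z)
    {i j : Fin N} (hij : i ≠ j) :
    (jacobiOperator α β (Lagrange.nodal (univ.erase j) z) -
        μ • Lagrange.nodal (univ.erase j) z).eval (z i) =
      2 * (1 - z i ^ 2) * (Lagrange.nodal (univ.erase i) z).eval (z i) *
        -(1 / (z i - z j) ^ 2) := by
  have hmem : i ∈ univ.erase j := mem_erase.2 ⟨hij, mem_univ i⟩
  have hne : z i - z j ≠ 0 := sub_ne_zero.2 (hz.ne hij)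
  have hderiv : (derivative (Lagrange.nodal (univ.erase j) z)).eval (z i) * (z i - z j) =
      (Lagrange.nodal (univ.erase i) z).eval (z i) := by
    have hmem' : j ∈ univ.erase i := mem_erase.2 ⟨hij.symm, mem_univ j⟩
    rw [Lagrange.eval_nodal_derivative_eval_node_eq hmem,
      Lagrange.nodal_eq_mul_nodal_erase hmem', erase_right_comm, eval_mul, eval_sub, eval_X,
      eval_C, mul_comm]
  have heval := congrArg (eval (z i)) (X_sub_C_mul_jacobiOperator_sub hode j)
  simp only [eval_mul, eval_add, eval_neg, eval_sub, eval_X, eval_C, eval_one, eval_pow,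
    eval_ofNat, Lagrange.eval_nodal_at_node hmem] at heval
  rw [← hderiv, eval_sub]
  field_simp
  linear_combination heval

lemma eval_jacobiOperator_sub_self (hz : Function.Injective z)
    (hode : jacobiOperator α β (Lagrange.nodal univ z) = μ • Lagrange.nodal univ z) (i : Fin N) :
    (jacobiOperator α β (Lagrange.nodal (univ.erase i) z) -
        μ • Lagrange.nodal (univ.erase i) z).eval (z i) =
      (Lagrange.nodal (univ.erase i) z).eval (z i) *
        (2 * (1 - z i ^ 2) * ∑ l ∈ univ.erase i, 1 / (z i - z l) ^ 2 +
          4 * z i * ∑ l ∈ univ.erase i, 1 / (z i - z l) + (α + β + 2)) := by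
  have hnode : ∀ l ∈ univ.erase i, z i ≠ z l := fun l hl ↦ hz.ne (ne_of_mem_erase hl).symm
  have hstieltjes := sum_one_div_sub_of_jacobiOperator_eq_smul hz hode i
  -- At the simple zero `z i` the derivative of `(X - z i) * K` is the value of `K`.
  have heval := congrArg (fun f ↦ (derivative f).eval (z i))
    (X_sub_C_mul_jacobiOperator_sub hode i)
  generalize jacobiOperator α β (Lagrange.nodal (univ.erase i) z) -
    μ • Lagrange.nodal (univ.erase i) z = K at heval ⊢
  simp only [derivative_mul, derivative_add, derivative_neg, derivative_sub, derivative_X,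
    derivative_C, derivative_one, derivative_X_pow, derivative_ofNat, eval_mul, eval_add, eval_neg,
    eval_sub, eval_X, eval_C, eval_one, eval_pow, eval_zero, eval_ofNat,
    eval_derivative_nodal hnode, eval_derivative_derivative_nodal hnode] at heval
  linear_combination heval - (Lagrange.nodal (univ.erase i) z).eval (z i) *
    (∑ l ∈ univ.erase i, 1 / (z i - z l)) * hstieltjes

lemma stieltjes_equilibrium (hz : Function.Injective z) (hmem : ∀ i, z i ∈ Set.Ioo (-1 : ℝ) 1)
    (hode : jacobiOperator α β (Lagrange.nodal univ z) = μ • Lagrange.nodal univ z) (i : Fin N) :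
    ∑ l ∈ univ.erase i, 1 / (z i - z l) - (α + 1) / 2 / (1 - z i) + (β + 1) / 2 / (1 + z i) =
      0 := by
  have hsub : 1 - z i ≠ 0 := by linarith [(hmem i).2]
  have hadd : 1 + z i ≠ 0 := by linarith [(hmem i).1]
  have hstieltjes := sum_one_div_sub_of_jacobiOperator_eq_smul hz hode i
  generalize ∑ l ∈ univ.erase i, 1 / (z i - z l) = S at hstieltjes ⊢
  field_simp
  linear_combination hstieltjes

lemma eval_jacobiOperator_sub_eq_jacobiHessian (hz : Function.Injective z)
    (hmem : ∀ i, z i ∈ Set.Ioo (-1 : ℝ) 1)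
    (hode : jacobiOperator α β (Lagrange.nodal univ z) = μ • Lagrange.nodal univ z)
    (i j : Fin N) :
    (jacobiOperator α β (Lagrange.nodal (univ.erase j) z) -
        μ • Lagrange.nodal (univ.erase j) z).eval (z i) =
      2 * (1 - z i ^ 2) * (Lagrange.nodal (univ.erase i) z).eval (z i) *
        jacobiHessian ((α + 1) / 2) ((β + 1) / 2) z i j := by
  rcases eq_or_ne i j with rfl | hij
  · have hsub : 1 - z i ≠ 0 := by linarith [(hmem i).2]
    have hadd : 1 + z i ≠ 0 := by linarith [(hmem i).1]
    have hequil := stieltjes_equilibrium hz hmem hode i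
    have hwalls : 4 * z i * ∑ l ∈ univ.erase i, 1 / (z i - z l) + (α + β + 2) =
        2 * (1 - z i ^ 2) * ((α + 1) / 2 / (1 - z i) ^ 2 + (β + 1) / 2 / (1 + z i) ^ 2) := by
      rw [show ∑ l ∈ univ.erase i, 1 / (z i - z l) =
        (α + 1) / 2 / (1 - z i) - (β + 1) / 2 / (1 + z i) by linear_combination hequil]
      field_simp
      ring
    rw [eval_jacobiOperator_sub_self hz hode, jacobiHessian, Matrix.of_apply, if_pos rfl]
    linear_combination (Lagrange.nodal (univ.erase i) z).eval (z i) * hwalls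
  · rw [eval_jacobiOperator_sub_of_ne hz hode hij, jacobiHessian, Matrix.of_apply, if_neg hij]

lemma of_eval_nodal_erase_eq_diagonal :
    (Matrix.of fun i j ↦ (Lagrange.nodal (univ.erase j) z).eval (z i)) =
      Matrix.diagonal fun i ↦ (Lagrange.nodal (univ.erase i) z).eval (z i) := by
  ext i j
  rcases eq_or_ne i j with rfl | hij
  · rw [Matrix.of_apply, Matrix.diagonal_apply_eq]
  · rw [Matrix.of_apply, Matrix.diagonal_apply_ne _ hij,
      Lagrange.eval_nodal_at_node (mem_erase.2 ⟨hij, mem_univ i⟩)]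

lemma coeff_jacobiOperator_X_pow {k m : ℕ} (hkm : k ≤ m) :
    (jacobiOperator α β (X ^ k)).coeff m = if m = k then jacobiEigenvalue α β k else 0 := by
  rw [coeff_jacobiOperator, coeff_X_pow, coeff_X_pow, coeff_X_pow,
    if_neg (show m + 2 ≠ k by omega), if_neg (show m + 1 ≠ k by omega)]
  split_ifs with h
  · rw [h]; ring
  · ring

theorem det_jacobiHessian_eq_prod (hz : Function.Injective z)
    (hmem : ∀ i, z i ∈ Set.Ioo (-1 : ℝ) 1)
    (hode : jacobiOperator α β (Lagrange.nodal univ z) = μ • Lagrange.nodal univ z) :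
    2 ^ N * (∏ i, (1 - z i ^ 2)) * (jacobiHessian ((α + 1) / 2) ((β + 1) / 2) z).det =
      ∏ k ∈ range N, (jacobiEigenvalue α β k - μ) := by
  set T : ℝ[X] →ₗ[ℝ] ℝ[X] := jacobiOperator α β - μ • LinearMap.id with hTdef
  have hcoeff (k m : ℕ) (hkm : k ≤ m) :
      (T (X ^ k)).coeff m = if m = k then jacobiEigenvalue α β k - μ else 0 := by
    rw [hTdef, LinearMap.sub_apply, coeff_sub, coeff_jacobiOperator_X_pow hkm,
      LinearMap.smul_apply, LinearMap.id_apply, coeff_smul, coeff_X_pow, smul_ite, smul_zero,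
      smul_eq_mul, mul_one]
    split_ifs <;> ring
  have hT (k : ℕ) : (T (X ^ k)).natDegree ≤ k :=
    natDegree_le_iff_coeff_eq_zero.2 fun m hm ↦ by rw [hcoeff k m hm.le, if_neg hm.ne']
  have hdeg (j : Fin N) : (Lagrange.nodal (univ.erase j) z).natDegree < N := by
    simpa [Lagrange.natDegree_nodal] using j.pos
  have hHessian : (Matrix.of fun i j ↦ (T (Lagrange.nodal (univ.erase j) z)).eval (z i)) =
      Matrix.diagonal
          (fun i ↦ 2 * (1 - z i ^ 2) * (Lagrange.nodal (univ.erase i) z).eval (z i)) *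
        jacobiHessian ((α + 1) / 2) ((β + 1) / 2) z := by
    ext i j
    rw [Matrix.diagonal_mul, ← eval_jacobiOperator_sub_eq_jacobiHessian hz hmem hode]
    rfl
  have hdet := det_eval_map_eq hT z hdeg
  rw [hHessian, of_eval_nodal_erase_eq_diagonal, Matrix.det_mul, Matrix.det_diagonal,
    Matrix.det_diagonal, prod_mul_distrib, prod_mul_distrib, Fin.prod_const,
    prod_congr rfl fun k _ ↦ (hcoeff k k le_rfl).trans (if_pos rfl)] at hdet
  refine mul_right_cancel₀ (b := ∏ i, (Lagrange.nodal (univ.erase i) z).eval (z i))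
    (prod_ne_zero_iff.2 fun i _ ↦ eval_nodal_erase_ne_zero hz i) ?_
  linear_combination hdet

lemma prod_jacobiEigenvalue_sub (α β : ℝ) (n : ℕ) :
    ∏ k ∈ range n, (jacobiEigenvalue α β k - jacobiEigenvalue α β n) =
      n.factorial * ∏ j ∈ range n, (n + α + β + 1 + j) := by
  have hfactorial : (n.factorial : ℝ) = ∏ k ∈ range n, ((n : ℝ) - k) := by
    rw [← Nat.descFactorial_self, Nat.descFactorial_eq_prod_range, Nat.cast_prod]
    exact prod_congr rfl fun k hk ↦ Nat.cast_sub (mem_range.1 hk).le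
  rw [hfactorial, ← prod_mul_distrib]
  exact prod_congr rfl fun k _ ↦ by rw [jacobiEigenvalue, jacobiEigenvalue]; ring

end HessianDeterminant

/-! ### The limit -/

section NormalizationLimit

open Polynomial

lemma eq_leadingCoeff_smul_nodal {K ι : Type*} [Field K] [Fintype ι] {P : K[X]} {z : ι → K}
    (hdeg : P.natDegree = Fintype.card ι) (hz : Function.Injective z)
    (hroot : ∀ i, P.eval (z i) = 0) : P = P.leadingCoeff • Lagrange.nodal univ z := by
  have hdvd : Lagrange.nodal univ z ∣ P :=
    prod_dvd_of_coprime
      (fun i _ j _ hij ↦ isCoprime_X_sub_C_of_isUnit_sub (sub_ne_zero.2 (hz.ne hij)).isUnit)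
      fun i _ ↦ dvd_iff_isRoot.2 (hroot i)
  rw [smul_eq_C_mul]
  refine eq_leadingCoeff_mul_of_monic_of_dvd_of_natDegree_le Lagrange.nodal_monic hdvd ?_
  rw [Lagrange.natDegree_nodal, card_univ, hdeg]

variable {α β : ℝ} {N : ℕ} {z : Fin N → ℝ}

lemma jacobiOperator_nodal_eq_smul (hα : -1 < α) (hβ : -1 < β) {P : ℝ[X]} (hdeg : P.degree = N)
    (horth : ∀ Q : ℝ[X], Q.degree < N → jacobiIntegral α β (P * Q) = 0)
    (hz : Function.Injective z) (hroot : ∀ i, P.eval (z i) = 0) :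
    jacobiOperator α β (Lagrange.nodal univ z) =
      jacobiEigenvalue α β N • Lagrange.nodal univ z := by
  have hlead : P.leadingCoeff ≠ 0 := by
    rintro h
    simp [leadingCoeff_eq_zero.1 h] at hdeg
  have hode := jacobiOperator_eq_smul_of_orthogonal hα hβ hdeg horth
  have hnodal := eq_leadingCoeff_smul_nodal
    ((natDegree_eq_of_degree_eq_some hdeg).trans (Fintype.card_fin N).symm) hz hroot
  rw [hnodal, map_smul, smul_comm] at hode
  exact smul_right_injective _ hlead hode

lemma sqrt_div_two_pi_rpow_eq {d n Q R Z : ℝ} (N : ℕ) (hn : 0 ≤ n) (hQ : 0 < Q) (hR : 0 < R)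
    (hdet : 2 ^ N * Z * d = n * Q) (hend : Z * Q ^ 2 = 4 ^ N * R) :
    √d / (2 * π) ^ ((N : ℝ) / 2) =
      √n * Q ^ ((3 : ℝ) / 2) / (2 ^ (2 * N) * π ^ ((N : ℝ) / 2) * √R) := by
  have hd : d = n * Q ^ 3 / (8 ^ N * R) := by
    have h8 : (8 : ℝ) ^ N = 2 ^ N * 4 ^ N := by rw [← mul_pow]; norm_num
    rw [eq_div_iff (by positivity), h8]
    linear_combination (-d * 2 ^ N) * hend + Q ^ 2 * hdet
  have hQ3 : √(Q ^ 3) = Q ^ ((3 : ℝ) / 2) := by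
    rw [sqrt_eq_rpow, ← rpow_natCast, ← rpow_mul hQ.le]
    norm_num
  have htwo : √((8 : ℝ) ^ N) * 2 ^ ((N : ℝ) / 2) = 2 ^ (2 * N) := by
    rw [sqrt_eq_rpow, ← rpow_natCast, show (8 : ℝ) = 2 ^ (3 : ℝ) by norm_num,
      ← rpow_mul (by norm_num), ← rpow_mul (by norm_num), ← rpow_add (by norm_num),
      ← rpow_natCast]
    congr 1
    push_cast
    ring
  rw [hd, sqrt_div (by positivity), sqrt_mul hn, hQ3, sqrt_mul (by positivity),
    mul_rpow (by norm_num) pi_pos.le, ← htwo, div_div]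
  congr 1
  ring

lemma prod_range_add_natCast_pos {x : ℝ} (hx : 0 < x) (n : ℕ) : 0 < ∏ j ∈ range n, (x + j) :=
  prod_pos fun j _ ↦ by positivity

lemma prod_range_natCast_add_pos (hα : -1 < α) (hβ : -1 < β) (n : ℕ) :
    0 < ∏ j ∈ range n, (n + α + β + 1 + j) := by
  rcases n.eq_zero_or_pos with rfl | hn
  · simp
  · have hn' : (1 : ℝ) ≤ n := by exact_mod_cast hn
    exact prod_range_add_natCast_pos (by linarith) n

lemma tendsto_inv_integral_alcove {v w : ℝ} (hv : 0 < v) (hw : 0 < w) (hz : StrictMono z)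
    (hmem : ∀ i, z i ∈ Set.Ioo (-1 : ℝ) 1)
    (hcrit : ∀ i, ∑ l ∈ univ.erase i, 1 / (z i - z l) - v / (1 - z i) + w / (1 + z i) = 0) :
    Tendsto (fun κ : ℝ ↦ (∫ x in alcove N, jacobiProduct κ (κ * v - 1 / 2) (κ * w - 1 / 2) x)⁻¹ *
        κ ^ (-(N : ℝ) / 2) * jacobiProduct 1 v w z ^ κ * ∏ j, (1 - z j ^ 2) ^ (-(1 : ℝ) / 2))
      atTop (𝓝 (√(jacobiHessian v w z).det / (2 * π) ^ ((N : ℝ) / 2))) := by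
  have hprod : 0 < ∏ j, (1 - z j ^ 2) ^ (-(1 : ℝ) / 2) :=
    prod_pos fun j _ ↦ rpow_pos_of_pos (by nlinarith [(hmem j).1, (hmem j).2]) _
  have hdet := (posDef_jacobiHessian hv hw hz hmem).det_pos
  have hlaplace := ((tendsto_rpow_mul_integral_alcove hv hw hz hmem hcrit).inv₀
    (by positivity)).const_mul (∏ j, (1 - z j ^ 2) ^ (-(1 : ℝ) / 2))
  rw [mul_inv, mul_inv_cancel_left₀ hprod.ne', inv_div] at hlaplace
  refine hlaplace.congr' ?_
  filter_upwards [eventually_gt_atTop 0] with κ hκ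
  rw [mul_inv, inv_div, neg_div (2 : ℝ) (N : ℝ), rpow_neg hκ.le]
  ring

theorem jacobi_normalization_limit_general (hα : -1 < α) (hβ : -1 < β) {P : ℝ[X]}
    (hdeg : P.degree = N) (horth : ∀ Q : ℝ[X], Q.degree < N → jacobiIntegral α β (P * Q) = 0)
    (hz : StrictMono z) (hroot : ∀ i, P.eval (z i) = 0) (hmem : ∀ i, z i ∈ Set.Ioo (-1 : ℝ) 1) :
    Tendsto (fun κ : ℝ ↦
        (∫ x in alcove N,
          jacobiProduct κ (κ * ((α + 1) / 2) - 1 / 2) (κ * ((β + 1) / 2) - 1 / 2) x)⁻¹ *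
          κ ^ (-(N : ℝ) / 2) * jacobiProduct 1 ((α + 1) / 2) ((β + 1) / 2) z ^ κ *
          ∏ j, (1 - z j ^ 2) ^ (-(1 : ℝ) / 2))
      atTop
      (𝓝 (√N.factorial * (∏ j ∈ range N, (N + α + β + 1 + j)) ^ ((3 : ℝ) / 2) /
        (2 ^ (2 * N) * π ^ ((N : ℝ) / 2) *
          √((∏ j ∈ range N, (α + 1 + j)) * ∏ j ∈ range N, (β + 1 + j))))) := by
  have hode := jacobiOperator_nodal_eq_smul hα hβ hdeg horth hz.injective hroot
  have hend := prod_one_sub_sq_mul_prod_sq hode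
  have hdet := det_jacobiHessian_eq_prod hz.injective hmem hode
  rw [prod_jacobiEigenvalue_sub] at hdet
  have hQ := prod_range_natCast_add_pos hα hβ N
  have hR := mul_pos (prod_range_add_natCast_pos (by linarith : 0 < α + 1) N)
    (prod_range_add_natCast_pos (by linarith : 0 < β + 1) N)
  rw [← sqrt_div_two_pi_rpow_eq N (Nat.cast_nonneg _) hQ hR hdet hend]
  exact tendsto_inv_integral_alcove (by linarith) (by linarith) hz hmem
    (stieltjes_equilibrium hz.injective hmem hode)

end NormalizationLimit

theorem jacobi_normalization_limit
    (N : ℕ) (hN : 1 ≤ N) (a b : ℝ) (ha : 0 ≤ a) (hb : 0 < b)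
    (α β : ℝ) (hα : α = a + b - 1) (hβ : β = b - 1)
    (P : Polynomial ℝ) (hPdeg : P.natDegree = N)
    (hPorth : ∀ Q : Polynomial ℝ, Q.natDegree < N →
      ∫ x in Set.Ioo (-1 : ℝ) 1,
        P.eval x * Q.eval x * (1 - x) ^ α * (1 + x) ^ β = 0)
    (hPone : P.eval 1 = (∏ j ∈ Finset.range N, (α + 1 + j)) / (N.factorial : ℝ))
    (z : Fin N → ℝ) (hzmono : StrictMono z)
    (hzroot : ∀ i, P.eval (z i) = 0)
    (hzmem : ∀ i, z i ∈ Set.Ioo (-1 : ℝ) 1)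
    (A : Set (Fin N → ℝ))
    (hA : A = {x | Monotone x ∧ ∀ i, x i ∈ Set.Icc (-1 : ℝ) 1})
    (φ : (Fin N → ℝ) → ℝ)
    (hφ : φ = fun x =>
      (∏ p ∈ Finset.univ.filter (fun p : Fin N × Fin N => p.1 < p.2), (x p.2 - x p.1)) *
      ∏ j, ((1 - x j) ^ ((a + b) / 2) * (1 + x j) ^ (b / 2)))
    (w : ℝ → (Fin N → ℝ) → ℝ)
    (hw : w = fun κ x =>
      (∏ p ∈ Finset.univ.filter (fun p : Fin N × Fin N => p.1 < p.2), (x p.2 - x p.1) ^ κ) *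
      ∏ i, ((1 - x i) ^ (κ * (a + b) / 2 - 1 / 2) * (1 + x i) ^ (κ * b / 2 - 1 / 2)))
    : Tendsto (fun κ : ℝ =>
        (∫ x in A, w κ x)⁻¹ * κ ^ (-(N : ℝ) / 2) * φ z ^ κ *
          ∏ j, (1 - z j ^ 2) ^ (-(1 : ℝ) / 2))
      atTop
      (𝓝 (Real.sqrt (N.factorial : ℝ) *
        (∏ j ∈ Finset.range N, ((N : ℝ) + α + β + 1 + j)) ^ ((3 : ℝ) / 2) /
        (2 ^ (2 * N) * π ^ ((N : ℝ) / 2) *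
          Real.sqrt ((∏ j ∈ Finset.range N, (α + 1 + j)) *
            (∏ j ∈ Finset.range N, (β + 1 + j)))))) := by
  subst hα hβ hA hφ hw
  have horth (Q : Polynomial ℝ) (hQ : Q.degree < N) :
      jacobiIntegral (a + b - 1) (b - 1) (P * Q) = 0 := by
    rcases eq_or_ne Q 0 with rfl | hQ0
    · simp [jacobiIntegral]
    · simpa only [jacobiIntegral, Polynomial.eval_mul] using
        hPorth Q ((Polynomial.natDegree_lt_iff_degree_lt hQ0).2 hQ)
  have hdeg : P.degree = N := (Polynomial.degree_eq_iff_natDegree_eq_of_pos hN).2 hPdeg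
  simpa only [alcove, jacobiProduct, rpow_one, sub_add_cancel, mul_div_assoc] using
    jacobi_normalization_limit_general (by linarith) (by linarith) hdeg horth hzmono hzroot hzmem
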